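/- Let n be a positive integer divisible by 3. Then, as polynomials modulo Φ_n(q)^2 (the square of the n-th cyclotomic polynomial), Σ_{k=0}^{n-1} q^k·C_k(q) ≡ q^{n(2n+1)/3} + (1/3)(q^n - 1)(2 + (n+1)q^{2n/3}), where C_k(q) = [2k choose k]_q - q·[2k choose k+1]_q is MacMahon's q-Catalan polynomial. -/

import Mathlib

open Polynomial Finset

/-- The Gaussian binomial coefficient as a polynomial in `q`, defined via the
    `q`-Pascal recurrence `[n+1, k+1] = [n, k] + q^(k+1) * [n, k+1]`. -/
noncomputable def qBinom : ℕ → ℕ → Polynomial ℚ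
  | _, 0 => 1
  | 0, _ + 1 => 0
  | n + 1, k + 1 => qBinom n k + X ^ (k + 1) * qBinom n (k + 1)

/-- MacMahon's `q`-Catalan polynomial `C_k(q) = [2k, k]_q - q * [2k, k+1]_q`. -/
noncomputable def qCatalan (k : ℕ) : Polynomial ℚ := qBinom (2 * k) k - X * qBinom (2 * k) (k + 1)

/-!
The sums `∑ q^k [2k, k+d]` over `k < n` satisfy a recurrence in `d` of step `3`, which expands them
in the `q`-binomials `[2n, n+j]` with explicit powers of `q` as coefficients. At a primitive
`n`-th root of unity `ζ` each `[2n, n+j]` with `0 < j < n` vanishes, and its Euler derivative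
`q d/dq` is `±2n ζ^a / (1 - ζ^j)`. Modulo `Φ_n(q)^2` only the value and the Euler derivative at `ζ`
matter, so everything comes down to a sum `W` of pentagonal terms weighted by `1 / (1 - ζ^j)`.

To evaluate `W`, recall that the alternating diagonal sums `a_m = ∑ (-1)^k q^(k(k-1)/2) [m-k, k]`
are themselves zero or generalized pentagonal terms. Writing `w_m` for `1 / (1 - ζ^m)`, read as
`0` when `n ∣ m`, absorption of the factors `1 - q^i` into the `q`-binomials and the truncated
`q`-binomial theorem identify `n ∑ w_m (ζ^m a_m + a_(m+1))`, over `m < n`, with minus the Euler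
derivative of `a_n + a_(n+1)` at `ζ`, which is explicit. For `n = 3N` the reflection `s ↦ N - s` of
the pentagonal terms turns the left side into `n (1 + ζ^(2N)) W`.
-/

section QBinom

@[simp]
theorem qBinom_zero_right (n : ℕ) : qBinom n 0 = 1 := by
  cases n <;> rw [qBinom]

@[simp]
theorem qBinom_zero_succ (k : ℕ) : qBinom 0 (k + 1) = 0 := by
  rw [qBinom]

theorem qBinom_succ_succ (n k : ℕ) :
    qBinom (n + 1) (k + 1) = qBinom n k + X ^ (k + 1) * qBinom n (k + 1) := by
  rw [qBinom]

theorem qBinom_eq_zero_of_lt {n k : ℕ} (h : n < k) : qBinom n k = 0 := by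
  induction n generalizing k with
  | zero => obtain ⟨k, rfl⟩ := Nat.exists_eq_add_one.2 h; exact qBinom_zero_succ k
  | succ n ih =>
    obtain ⟨k, rfl⟩ := Nat.exists_eq_add_one.2 (Nat.zero_lt_of_lt h)
    rw [qBinom_succ_succ, ih (by lia), ih (by lia), mul_zero, add_zero]

@[simp]
theorem qBinom_self (n : ℕ) : qBinom n n = 1 := by
  induction n with
  | zero => exact qBinom_zero_right 0
  | succ n ih =>
    rw [qBinom_succ_succ, ih, qBinom_eq_zero_of_lt n.lt_succ_self, mul_zero, add_zero]

theorem qBinom_succ_right (n k : ℕ) :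
    X ^ k * (1 - X ^ (k + 1)) * qBinom n (k + 1) = (X ^ k - X ^ n) * qBinom n k := by
  induction n generalizing k with
  | zero => cases k <;> simp
  | succ n ih =>
    cases k with
    | zero =>
      have h := ih 0
      rw [qBinom_succ_succ]
      simp only [qBinom_zero_right] at h ⊢
      linear_combination X * h
    | succ k =>
      rw [qBinom_succ_succ n (k + 1), qBinom_succ_succ n k]
      linear_combination X ^ (k + 2) * ih (k + 1) + X * ih k

theorem one_sub_X_pow_mul_qBinom_succ_succ (n k : ℕ) :
    (1 - X ^ (k + 1)) * qBinom (n + 1) (k + 1) = (1 - X ^ (n + 1)) * qBinom n k := by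
  rw [qBinom_succ_succ]
  linear_combination X * qBinom_succ_right n k

/-- The second `q`-Pascal rule, multiplied by `X ^ k` to avoid the exponent `n - k`. -/
theorem X_pow_mul_qBinom_succ_succ (n k : ℕ) :
    X ^ k * qBinom (n + 1) (k + 1) = X ^ k * qBinom n (k + 1) + X ^ n * qBinom n k := by
  rw [qBinom_succ_succ]
  linear_combination -qBinom_succ_right n k

theorem qBinom_add_two_add_two (n k : ℕ) :
    qBinom (n + 2) (k + 2) = qBinom n k + (X ^ (k + 1) + X ^ (k + 2)) * qBinom n (k + 1) +
      X ^ (2 * k + 4) * qBinom n (k + 2) := by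
  rw [qBinom_succ_succ (n + 1), qBinom_succ_succ n k, qBinom_succ_succ n (k + 1)]
  ring

end QBinom

section QSign

/-- The factor `(-1)^k q^(k(k-1)/2)` of the `q`-binomial theorem. -/
noncomputable def qSign (k : ℕ) : ℚ[X] := (-1) ^ k * X ^ k.choose 2

@[simp]
theorem qSign_zero : qSign 0 = 1 := by
  simp [qSign]

theorem qSign_succ (k : ℕ) : qSign (k + 1) = -(X ^ k * qSign k) := by
  rw [qSign, qSign, Nat.choose_succ_succ' k 1, Nat.choose_one_right]
  ring

theorem sum_qSign_mul_qBinom (n r : ℕ) :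
    ∑ k ∈ range (r + 1), qSign k * qBinom (n + 1) k = qSign r * X ^ r * qBinom n r := by
  induction r with
  | zero => simp
  | succ r ih =>
    rw [sum_range_succ, ih, qBinom_succ_succ, qSign_succ]
    ring

/-- The term `(-1)^s q^(s(3s-1)/2)` of Euler's pentagonal series. -/
noncomputable def pentagonalTerm (s : ℕ) : ℚ[X] := (-1) ^ s * X ^ pentagonal s

@[simp]
theorem pentagonalTerm_zero : pentagonalTerm 0 = 1 := by
  simp [pentagonalTerm, pentagonal_def]

theorem pentagonalTerm_succ (s : ℕ) :
    pentagonalTerm (s + 1) = -(X ^ (3 * s + 1) * pentagonalTerm s) := by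
  have h : pentagonal (s + 1 : ℕ) = pentagonal s + (3 * s + 1) := by
    grind [two_mul_natCast_pentagonal]
  rw [pentagonalTerm, pentagonalTerm, h]
  ring

theorem pentagonalTerm_add (s t : ℕ) :
    pentagonalTerm (s + t) = X ^ (3 * (s * t)) * (pentagonalTerm s * pentagonalTerm t) := by
  induction t with
  | zero => simp
  | succ t ih =>
    rw [← add_assoc, pentagonalTerm_succ, pentagonalTerm_succ, ih]
    ring

theorem X_pow_mul_pentagonalTerm_sq (s : ℕ) : X ^ s * pentagonalTerm s ^ 2 = X ^ (3 * s ^ 2) := by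
  induction s with
  | zero => simp
  | succ s ih =>
    rw [pentagonalTerm_succ]
    linear_combination X ^ (6 * s + 3) * ih

theorem qSign_three_mul_add (t r : ℕ) :
    qSign (3 * t + r) * (X ^ (2 * t) * pentagonalTerm t) =
      qSign r * X ^ (6 * t ^ 2 + 3 * (r * t)) := by
  induction t with
  | zero => simp
  | succ t ih =>
    rw [show 3 * (t + 1) + r = 3 * t + r + 1 + 1 + 1 by ring, qSign_succ, qSign_succ, qSign_succ,
      pentagonalTerm_succ]
    linear_combination X ^ (12 * t + 3 * r + 6) * ih

end QSign

section CentralSum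

/-- The partial sum `∑ q^k [2k, k+d]` over `k < n`; the Catalan sum combines `d = 0` and `d = 1`. -/
noncomputable def centralSum (d n : ℕ) : ℚ[X] := ∑ k ∈ range n, X ^ k * qBinom (2 * k) (k + d)

theorem centralSum_eq_zero {d n : ℕ} (h : n ≤ d) : centralSum d n = 0 :=
  sum_eq_zero fun k hk ↦ by
    rw [qBinom_eq_zero_of_lt (by have := mem_range.1 hk; lia), mul_zero]

theorem sum_X_pow_mul_qCatalan (n : ℕ) :
    ∑ k ∈ range n, X ^ k * qCatalan k = centralSum 0 n - X * centralSum 1 n := by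
  rw [centralSum, centralSum, mul_sum, ← sum_sub_distrib]
  exact sum_congr rfl fun k _ ↦ by rw [qCatalan, add_zero]; ring

theorem X_pow_mul_qBinom_two_mul (n j : ℕ) :
    X ^ j * (1 - X ^ (n + j + 1)) * qBinom (2 * n) (n + j + 1) =
      (X ^ j - X ^ n) * qBinom (2 * n) (n + j) := by
  apply mul_left_cancel₀ (pow_ne_zero n (X_ne_zero (R := ℚ)))
  linear_combination qBinom_succ_right (2 * n) (n + j)

theorem centralSum_add_three (d n : ℕ) :
    centralSum d n = X ^ d * qBinom (2 * n) (n + d + 1) -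
      X ^ (3 * d + 3) * qBinom (2 * n) (n + d + 2) + X ^ (4 * d + 6) * centralSum (d + 3) n := by
  induction n with
  | zero => simp [centralSum, qBinom_eq_zero_of_lt]
  | succ n ih =>
    have h₁ : qBinom (2 * (n + 1)) (n + 1 + d + 1) = _ :=
      (congrArg₂ qBinom (by ring) (by ring)).trans (qBinom_add_two_add_two (2 * n) (n + d))
    have h₂ : qBinom (2 * (n + 1)) (n + 1 + d + 2) = _ :=
      (congrArg₂ qBinom (by ring) (by ring)).trans (qBinom_add_two_add_two (2 * n) (n + d + 1))
    have hsucc (e : ℕ) :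
        centralSum e (n + 1) = centralSum e n + X ^ n * qBinom (2 * n) (n + e) :=
      sum_range_succ _ n
    rw [hsucc, hsucc, ih, h₁, h₂]
    linear_combination X_pow_mul_qBinom_two_mul n d -
      X ^ (2 * d + 2) * X_pow_mul_qBinom_two_mul n (d + 1) -
      X ^ (3 * d + n + 4) * X_pow_mul_qBinom_two_mul n (d + 2)

theorem centralSum_eq_sum_add (d n M : ℕ) :
    centralSum d n =
      ∑ t ∈ range M, X ^ (4 * d * t + 6 * t ^ 2) *
        (X ^ (d + 3 * t) * qBinom (2 * n) (n + (d + 3 * t) + 1) -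
          X ^ (3 * (d + 3 * t) + 3) * qBinom (2 * n) (n + (d + 3 * t) + 2)) +
      X ^ (4 * d * M + 6 * M ^ 2) * centralSum (d + 3 * M) n := by
  induction M with
  | zero => simp
  | succ M ih =>
    rw [ih, sum_range_succ, add_assoc (∑ _ ∈ _, _), add_right_inj,
      centralSum_add_three (d + 3 * M) n, show d + 3 * (M + 1) = d + 3 * M + 3 by ring]
    ring

theorem centralSum_eq_sum {d n M : ℕ} (h : n ≤ d + 3 * M) :
    centralSum d n =
      ∑ t ∈ range M, X ^ (4 * d * t + 6 * t ^ 2) *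
        (X ^ (d + 3 * t) * qBinom (2 * n) (n + (d + 3 * t) + 1) -
          X ^ (3 * (d + 3 * t) + 3) * qBinom (2 * n) (n + (d + 3 * t) + 2)) := by
  rw [centralSum_eq_sum_add d n M, centralSum_eq_zero h, mul_zero, add_zero]

end CentralSum

section AltBinomSum

/-- The alternating sum `∑ (-1)^k q^(k(k-1)/2 + jk) [m-k, k]` along a diagonal of the `q`-Pascal
triangle, indexed by the pairs `(m - k, k)` to avoid truncated subtraction. -/
noncomputable def altBinomSum (j m : ℕ) : ℚ[X] :=
  ∑ p ∈ antidiagonal m, qSign p.2 * X ^ (j * p.2) * qBinom p.1 p.2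

theorem altBinomSum_succ (j m : ℕ) :
    altBinomSum j (m + 1) = 1 + ∑ p ∈ antidiagonal m,
      qSign (p.2 + 1) * X ^ (j * (p.2 + 1)) * qBinom p.1 (p.2 + 1) := by
  simp [altBinomSum, Nat.sum_antidiagonal_succ']

theorem altBinomSum_add_two (j m : ℕ) :
    altBinomSum j (m + 2) = 1 + ∑ p ∈ antidiagonal m,
      qSign (p.2 + 1) * X ^ (j * (p.2 + 1)) * qBinom (p.1 + 1) (p.2 + 1) := by
  simp [altBinomSum_succ, Nat.sum_antidiagonal_succ]

theorem altBinomSum_eq_sub (j m : ℕ) :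
    altBinomSum j (m + 2) =
      altBinomSum (j + 1) (m + 1) - X ^ j * altBinomSum (j + 1) m := by
  rw [altBinomSum_add_two, altBinomSum_succ, altBinomSum, add_sub_assoc, mul_sum,
    ← sum_sub_distrib]
  refine congrArg (1 + ·) (sum_congr rfl fun p _ ↦ ?_)
  rw [qBinom_succ_succ, qSign_succ]
  ring

theorem altBinomSum_succ_eq_sub (j m : ℕ) :
    altBinomSum (j + 1) (m + 2) =
      altBinomSum (j + 1) (m + 1) - X ^ (m + j + 1) * altBinomSum j m := by
  rw [altBinomSum_add_two, altBinomSum_succ, altBinomSum, add_sub_assoc, mul_sum,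
    ← sum_sub_distrib]
  refine congrArg (1 + ·) (sum_congr rfl fun p hp ↦ ?_)
  rw [← mem_antidiagonal.1 hp, qSign_succ]
  linear_combination (-(qSign p.2 * X ^ (j * (p.2 + 1) + p.2 + 1))) *
    X_pow_mul_qBinom_succ_succ p.1 p.2

theorem altBinomSum_zero_add_three (m : ℕ) :
    altBinomSum 0 (m + 3) = -(X ^ (m + 1) * altBinomSum 0 m) := by
  rw [altBinomSum_eq_sub 0 (m + 1), altBinomSum_succ_eq_sub 0 m]
  ring

theorem altBinomSum_zero_three_mul (s : ℕ) : altBinomSum 0 (3 * s) = pentagonalTerm s := by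
  induction s with
  | zero => simp [altBinomSum]
  | succ s ih => rw [mul_add_one, altBinomSum_zero_add_three, ih, pentagonalTerm_succ]

theorem altBinomSum_zero_three_mul_add_one (s : ℕ) :
    altBinomSum 0 (3 * s + 1) = X ^ s * pentagonalTerm s := by
  induction s with
  | zero => simp [altBinomSum_succ]
  | succ s ih =>
    rw [show 3 * (s + 1) + 1 = 3 * s + 1 + 3 by ring, altBinomSum_zero_add_three, ih,
      pentagonalTerm_succ]
    ring

theorem altBinomSum_zero_three_mul_add_two (s : ℕ) : altBinomSum 0 (3 * s + 2) = 0 := by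
  induction s with
  | zero => simp [altBinomSum_add_two, qSign_succ]
  | succ s ih =>
    rw [show 3 * (s + 1) + 2 = 3 * s + 2 + 3 by ring, altBinomSum_zero_add_three, ih, mul_zero,
      neg_zero]

theorem altBinomSum_zero_add_three_eq_sum (m : ℕ) :
    altBinomSum 0 (m + 3) =
      ∑ p ∈ antidiagonal m, qSign (p.2 + 1) * (X ^ (p.1 + 1) * qBinom p.1 p.2) := by
  rw [altBinomSum_zero_add_three, altBinomSum, mul_sum, ← sum_neg_distrib]
  refine sum_congr rfl fun p hp ↦ ?_
  rw [← mem_antidiagonal.1 hp, qSign_succ]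
  ring

theorem altBinomSum_add_two_add_altBinomSum_add_three (m : ℕ) :
    altBinomSum 0 (m + 2) + altBinomSum 0 (m + 3) =
      1 + ∑ p ∈ antidiagonal m, qSign (p.2 + 1) *
        (qBinom (p.1 + 1) (p.2 + 1) + X ^ (p.1 + 1) * qBinom p.1 p.2) := by
  rw [altBinomSum_add_two, altBinomSum_zero_add_three_eq_sum, add_assoc, ← sum_add_distrib]
  exact congrArg (1 + ·) (sum_congr rfl fun p _ ↦ by ring)

end AltBinomSum

section EulerDerivative

/-- The Euler derivative `q d/dq` on polynomials. -/
noncomputable def eulerDeriv : Derivation ℚ ℚ[X] ℚ[X] := mkDerivation ℚ X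

theorem eulerDeriv_X_pow (a : ℕ) : eulerDeriv (X ^ a) = (a : ℚ[X]) * X ^ a := by
  rw [eulerDeriv, mkDerivation_apply, derivative_X_pow, C_eq_natCast, smul_eq_mul, mul_assoc]
  cases a with
  | zero => simp
  | succ a => rw [add_tsub_cancel_right, pow_succ]

theorem two_mul_eulerDeriv_pentagonalTerm (s : ℕ) :
    2 * eulerDeriv (pentagonalTerm s) = (s * (3 * s - 1) : ℚ[X]) * pentagonalTerm s := by
  have h : 2 * (pentagonal s : ℚ[X]) = s * (3 * s - 1) := by
    exact_mod_cast congrArg (Int.cast : ℤ → ℚ[X]) (two_mul_natCast_pentagonal s)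
  have hsign : eulerDeriv ((-1) ^ s) = 0 := by simp
  rw [pentagonalTerm, Derivation.leibniz, hsign, eulerDeriv_X_pow]
  simp only [smul_eq_mul]
  linear_combination (-1) ^ s * X ^ pentagonal s * h

variable {K : Type*} [Field K] [CharZero K] {ζ : K}

theorem aeval_eulerDeriv (f : ℚ[X]) : aeval ζ (eulerDeriv f) = ζ * aeval ζ (derivative f) := by
  simp [eulerDeriv, mkDerivation_apply, mul_comm]

theorem aeval_eulerDeriv_mul (f g : ℚ[X]) :
    aeval ζ (eulerDeriv (f * g)) =
      aeval ζ f * aeval ζ (eulerDeriv g) + aeval ζ g * aeval ζ (eulerDeriv f) := by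
  simp

theorem sq_minpoly_dvd {F L : Type*} [Field F] [Field L] [Algebra F L] {x : L}
    (hx : IsSeparable F x) {f : F[X]} (hf : aeval x f = 0) (hf' : aeval x (derivative f) = 0) :
    minpoly F x ^ 2 ∣ f := by
  obtain ⟨g, rfl⟩ := minpoly.dvd F x hf
  have hg : aeval x (derivative (minpoly F x)) * aeval x g = 0 := by
    simpa using hf'
  have hg : aeval x g = 0 :=
    (mul_eq_zero.1 hg).resolve_left (hx.aeval_derivative_ne_zero (minpoly.aeval F x))
  rw [sq]
  exact mul_dvd_mul_left _ (minpoly.dvd F x hg)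

theorem cyclotomic_sq_dvd_sub {n : ℕ} (hn : 0 < n) (hζ : IsPrimitiveRoot ζ n) {f g : ℚ[X]}
    (h : aeval ζ f = aeval ζ g) (h' : aeval ζ (eulerDeriv f) = aeval ζ (eulerDeriv g)) :
    cyclotomic n ℚ ^ 2 ∣ f - g := by
  rw [cyclotomic_eq_minpoly_rat hζ hn]
  have hint : IsIntegral ℚ ζ := (hζ.isIntegral hn).tower_top
  refine sq_minpoly_dvd (minpoly.irreducible hint).separable (by rw [map_sub, h, sub_self]) ?_
  rw [aeval_eulerDeriv, aeval_eulerDeriv] at h'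
  rw [derivative_sub, map_sub, mul_left_cancel₀ (hζ.ne_zero hn.ne') h', sub_self]

end EulerDerivative

section QRecip

variable {K : Type*} [Field K] {ζ : K}

/-- The weight `1/(1 - ζ^i)`. It has the junk value `0` when `ζ^i = 1`, so that the sums below can
run over full residue systems. -/
noncomputable def qRecip (ζ : K) (i : ℕ) : K := (1 - ζ ^ i)⁻¹

theorem qRecip_eq_zero {i : ℕ} (h : ζ ^ i = 1) : qRecip ζ i = 0 := by
  rw [qRecip, h, sub_self, inv_zero]

theorem one_sub_pow_mul_qRecip {i : ℕ} (h : ζ ^ i ≠ 1) : (1 - ζ ^ i) * qRecip ζ i = 1 :=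
  mul_inv_cancel₀ (sub_ne_zero.2 h.symm)

theorem qRecip_reflect {i k : ℕ} (h : ζ ^ (i + k) = 1) :
    qRecip ζ k = -(ζ ^ i * qRecip ζ i) := by
  rw [pow_add] at h
  by_cases hi : ζ ^ i = 1
  · rw [hi, one_mul] at h
    rw [qRecip_eq_zero hi, qRecip_eq_zero h, mul_zero, neg_zero]
  · have hk : ζ ^ k ≠ 1 := fun hk ↦ hi (by rwa [hk, mul_one] at h)
    apply mul_left_cancel₀ (sub_ne_zero.2 hk.symm)
    rw [one_sub_pow_mul_qRecip hk]
    linear_combination (-1 : K) * one_sub_pow_mul_qRecip hi - qRecip ζ i * h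

end QRecip

section RootOfUnity

variable {K : Type*} [Field K] [CharZero K] {ζ : K} {n : ℕ}

theorem aeval_eq_zero_of_one_sub_X_pow_mul_eq {f g : ℚ[X]} {a b : ℕ}
    (h : (1 - X ^ a) * f = (1 - X ^ b) * g) (ha : ζ ^ a ≠ 1) (hb : ζ ^ b = 1) :
    aeval ζ f = 0 := by
  have h := congrArg (aeval ζ) h
  simp only [map_mul, map_sub, map_one, map_pow, aeval_X, hb, sub_self, zero_mul] at h
  exact (mul_eq_zero.1 h).resolve_left (sub_ne_zero.2 ha.symm)

theorem aeval_eulerDeriv_of_one_sub_X_pow_mul_eq {f g : ℚ[X]} {a b : ℕ}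
    (h : (1 - X ^ a) * f = (1 - X ^ b) * g) (ha : ζ ^ a ≠ 1) (hb : ζ ^ b = 1) :
    aeval ζ (eulerDeriv f) = -(b * aeval ζ g * qRecip ζ a) := by
  have hf := aeval_eq_zero_of_one_sub_X_pow_mul_eq h ha hb
  have h := congrArg (aeval ζ ∘ eulerDeriv) h
  simp only [Function.comp_apply, aeval_eulerDeriv_mul, map_sub, Derivation.map_one_eq_zero,
    eulerDeriv_X_pow, map_mul, map_natCast, map_pow, aeval_X, map_one, map_zero, hf, hb] at h
  linear_combination qRecip ζ a * h - aeval ζ (eulerDeriv f) * one_sub_pow_mul_qRecip ha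

theorem aeval_qBinom_eq_zero {k : ℕ} (hn : ζ ^ (n + 1) = 1) (hk : ζ ^ (k + 1) ≠ 1) :
    aeval ζ (qBinom (n + 1) (k + 1)) = 0 :=
  aeval_eq_zero_of_one_sub_X_pow_mul_eq (one_sub_X_pow_mul_qBinom_succ_succ n k) hk hn

theorem aeval_eulerDeriv_qBinom {k : ℕ} (hn : ζ ^ (n + 1) = 1) (hk : ζ ^ (k + 1) ≠ 1) :
    aeval ζ (eulerDeriv (qBinom (n + 1) (k + 1))) =
      -((n + 1 : ℕ) * aeval ζ (qBinom n k) * qRecip ζ (k + 1)) :=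
  aeval_eulerDeriv_of_one_sub_X_pow_mul_eq (one_sub_X_pow_mul_qBinom_succ_succ n k) hk hn

theorem aeval_qSign_succ (k : ℕ) : aeval ζ (qSign (k + 1)) = -(ζ ^ k * aeval ζ (qSign k)) := by
  simp [qSign_succ]

theorem aeval_qSign_mul_qBinom (hζ : IsPrimitiveRoot ζ n) {m r j : ℕ} (hm : ζ ^ (m + 1) = 1)
    (hr : ζ ^ r = 1) (hj : j < n) :
    aeval ζ (qSign (j + 1)) * aeval ζ (qBinom m (r + j)) = -aeval ζ (qBinom m r) := by
  induction j with
  | zero => simp [qSign_succ]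
  | succ j ih =>
    have hne : ζ ^ (r + j + 1) ≠ 1 := by
      rw [add_assoc, pow_add, hr, one_mul]
      exact hζ.pow_ne_one_of_pos_of_lt (by lia) hj
    have h : aeval ζ (qBinom m (r + j)) + ζ ^ (r + j + 1) * aeval ζ (qBinom m (r + j + 1)) = 0 := by
      simpa [qBinom_succ_succ] using aeval_qBinom_eq_zero hm hne
    rw [add_assoc r, pow_add, hr] at h
    rw [aeval_qSign_succ, ← ih (by lia)]
    linear_combination (-aeval ζ (qSign (j + 1))) * h

theorem aeval_qSign_self (hζ : IsPrimitiveRoot ζ n) (hn : 0 < n) : aeval ζ (qSign n) = -1 := by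
  obtain ⟨n, rfl⟩ := Nat.exists_eq_add_one.2 hn
  simpa using aeval_qSign_mul_qBinom (r := 0) hζ hζ.pow_eq_one (pow_zero ζ) n.lt_succ_self

theorem aeval_qSign_mul_qBinom_two_mul_add_one (hζ : IsPrimitiveRoot ζ (n + 1)) {j : ℕ}
    (hj : j < n + 1) :
    aeval ζ (qSign (j + 1)) * aeval ζ (qBinom (2 * n + 1) (n + 1 + j)) = -1 := by
  have hpow : ζ ^ (2 * n + 1 + 1) = 1 := by
    rw [show 2 * n + 1 + 1 = (n + 1) * 2 by ring, pow_mul, hζ.pow_eq_one, one_pow]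
  have hlast := aeval_qSign_mul_qBinom hζ hpow hζ.pow_eq_one n.lt_succ_self
  rw [show n + 1 + n = 2 * n + 1 by ring, qBinom_self, map_one, mul_one,
    aeval_qSign_self hζ n.succ_pos] at hlast
  rw [aeval_qSign_mul_qBinom hζ hpow hζ.pow_eq_one hj, ← hlast]

theorem aeval_qBinom_two_mul (hζ : IsPrimitiveRoot ζ n) {j : ℕ} (h0 : 0 < j) (hj : j < n) :
    aeval ζ (qBinom (2 * n) (n + j)) = 0 := by
  obtain ⟨n, rfl⟩ := Nat.exists_eq_add_one.2 (h0.trans hj)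
  obtain ⟨j, rfl⟩ := Nat.exists_eq_add_one.2 h0
  apply aeval_qBinom_eq_zero (n := 2 * n + 1) (k := n + 1 + j)
  · rw [show 2 * n + 1 + 1 = (n + 1) * 2 by ring, pow_mul, hζ.pow_eq_one, one_pow]
  · rw [add_assoc, pow_add, hζ.pow_eq_one, one_mul]
    exact hζ.pow_ne_one_of_pos_of_lt h0.ne' hj

theorem aeval_qSign_mul_mul_qBinom_two_mul (hζ : IsPrimitiveRoot ζ n) {j : ℕ} (h0 : 0 < j)
    (hj : j < n) (g : ℚ[X]) : aeval ζ (qSign j * g * qBinom (2 * n) (n + j)) = 0 := by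
  rw [map_mul, aeval_qBinom_two_mul hζ h0 hj, mul_zero]

theorem qSign_mul_aeval_eulerDeriv_qBinom_two_mul (hζ : IsPrimitiveRoot ζ n) {j : ℕ} (h0 : 0 < j)
    (hj : j < n) :
    aeval ζ (qSign j) * aeval ζ (eulerDeriv (qBinom (2 * n) (n + j))) = 2 * n * qRecip ζ j := by
  obtain ⟨n, rfl⟩ := Nat.exists_eq_add_one.2 (h0.trans hj)
  obtain ⟨j, rfl⟩ := Nat.exists_eq_add_one.2 h0
  have hper : ζ ^ (n + 1 + j + 1) = ζ ^ (j + 1) := by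
    rw [add_assoc, pow_add, hζ.pow_eq_one, one_mul]
  have h := aeval_eulerDeriv_qBinom (ζ := ζ) (n := 2 * n + 1) (k := n + 1 + j)
    (by rw [show 2 * n + 1 + 1 = (n + 1) * 2 by ring, pow_mul, hζ.pow_eq_one, one_pow])
    (by rw [hper]; exact hζ.pow_ne_one_of_pos_of_lt h0.ne' hj)
  rw [qRecip, hper, ← qRecip] at h
  refine (congrArg _ h).trans ?_
  push_cast
  linear_combination (-(2 * (n + 1) * qRecip ζ (j + 1))) *
    aeval_qSign_mul_qBinom_two_mul_add_one hζ (Nat.lt_of_succ_lt hj)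

theorem aeval_eulerDeriv_qSign_mul_qBinom_two_mul (hζ : IsPrimitiveRoot ζ n) {j : ℕ} (h0 : 0 < j)
    (hj : j < n) (g : ℚ[X]) :
    aeval ζ (eulerDeriv (qSign j * g * qBinom (2 * n) (n + j))) =
      2 * n * (aeval ζ g * qRecip ζ j) := by
  rw [aeval_eulerDeriv_mul, aeval_qBinom_two_mul hζ h0 hj, map_mul]
  linear_combination aeval ζ g * qSign_mul_aeval_eulerDeriv_qBinom_two_mul hζ h0 hj

end RootOfUnity

section DiagonalIdentity

theorem one_sub_X_pow_mul_qBinom_add (i k : ℕ) :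
    (1 - X ^ (k + 1)) * (qBinom (i + 1) (k + 1) + X ^ (i + 1) * qBinom i k) =
      (1 - X ^ (i + k + 2)) * qBinom i k := by
  linear_combination one_sub_X_pow_mul_qBinom_succ_succ i k

theorem one_sub_X_pow_mul_X_pow_mul_qBinom_add (i k : ℕ) :
    (1 - X ^ (i + 1)) * (X ^ (i + k + 2) * qBinom (i + 1) (k + 1) + X ^ (i + 1) * qBinom i k) =
      (1 - X ^ (i + k + 2)) * (X ^ (i + 1) * qBinom (i + 1) (k + 1)) := by
  linear_combination (-X ^ (i + 1)) * one_sub_X_pow_mul_qBinom_succ_succ i k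

variable {K : Type*} [Field K] [CharZero K] {ζ : K} {m n : ℕ}

theorem aeval_eulerDeriv_altBinomSum_add (hζ : IsPrimitiveRoot ζ (m + 2)) :
    aeval ζ (eulerDeriv (altBinomSum 0 (m + 2) + altBinomSum 0 (m + 3))) =
      -((m + 2 : ℕ) * ∑ p ∈ antidiagonal m,
        qRecip ζ (p.2 + 1) * aeval ζ (qSign (p.2 + 1) * qBinom p.1 p.2)) := by
  rw [altBinomSum_add_two_add_altBinomSum_add_three, map_add, Derivation.map_one_eq_zero, zero_add,
    map_sum, map_sum, mul_sum, ← sum_neg_distrib]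
  refine sum_congr rfl fun p hp ↦ ?_
  have hp := mem_antidiagonal.1 hp
  have hne : ζ ^ (p.2 + 1) ≠ 1 := hζ.pow_ne_one_of_pos_of_lt (by lia) (by lia)
  have habs := one_sub_X_pow_mul_qBinom_add p.1 p.2
  rw [hp] at habs
  rw [aeval_eulerDeriv_mul, aeval_eq_zero_of_one_sub_X_pow_mul_eq habs hne hζ.pow_eq_one,
    aeval_eulerDeriv_of_one_sub_X_pow_mul_eq habs hne hζ.pow_eq_one, map_mul]
  ring

theorem qRecip_mul_qBinom_add {i k : ℕ} (hi : ζ ^ (i + 1) ≠ 1) (hik : ζ ^ (i + k + 2) ≠ 1) :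
    qRecip ζ (i + k + 2) * (ζ ^ (i + k + 2) * aeval ζ (qBinom (i + 1) (k + 1)) +
        ζ ^ (i + 1) * aeval ζ (qBinom i k)) =
      ζ ^ (i + 1) * qRecip ζ (i + 1) * aeval ζ (qBinom (i + 1) (k + 1)) := by
  have h := congrArg (aeval ζ) (one_sub_X_pow_mul_X_pow_mul_qBinom_add i k)
  simp only [map_mul, map_sub, map_add, map_pow, map_one, aeval_X] at h
  apply mul_left_cancel₀ (sub_ne_zero.2 hi.symm)
  rw [mul_left_comm, h]
  linear_combination ζ ^ (i + 1) * aeval ζ (qBinom (i + 1) (k + 1)) *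
    (one_sub_pow_mul_qRecip hik - one_sub_pow_mul_qRecip hi)

theorem qRecip_mul_altBinomSum_add (hζ : IsPrimitiveRoot ζ n) (hm : m < n) :
    qRecip ζ m * (ζ ^ m * aeval ζ (altBinomSum 0 m) + aeval ζ (altBinomSum 0 (m + 1))) =
      ∑ p ∈ antidiagonal m, ζ ^ p.1 * qRecip ζ p.1 * aeval ζ (qSign p.2 * qBinom p.1 p.2) := by
  match m with
  | 0 => simp [qRecip]
  | 1 =>
    simp [altBinomSum_zero_three_mul_add_one 0, altBinomSum_zero_three_mul_add_two 0,
      Nat.sum_antidiagonal_succ, qRecip, mul_comm]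
  | m + 2 =>
    rw [altBinomSum_add_two, altBinomSum_zero_add_three_eq_sum, Nat.sum_antidiagonal_succ',
      Nat.sum_antidiagonal_succ]
    simp only [map_add, map_one, map_sum, qBinom_zero_right, qBinom_zero_succ, qSign_zero, mul_zero,
      map_zero, zero_add, mul_one]
    rw [mul_add (ζ ^ _), mul_one, add_assoc, mul_add, mul_comm, mul_sum (a := ζ ^ _),
      ← sum_add_distrib, mul_sum]
    refine congrArg (_ + ·) (sum_congr rfl fun p hp ↦ ?_)
    obtain ⟨i, k⟩ := p
    obtain rfl : i + k = m := mem_antidiagonal.1 hp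
    simp only [map_mul, map_pow, aeval_X, zero_mul, pow_zero, mul_one]
    have hi : ζ ^ (i + 1) ≠ 1 := hζ.pow_ne_one_of_pos_of_lt (by lia) (by lia)
    have hik : ζ ^ (i + k + 2) ≠ 1 := hζ.pow_ne_one_of_pos_of_lt (by lia) hm
    linear_combination aeval ζ (qSign (k + 1)) * qRecip_mul_qBinom_add hi hik

theorem sum_antidiagonal_qRecip (hζ : IsPrimitiveRoot ζ (m + 2)) :
    ∑ j ∈ range (m + 2), ∑ p ∈ antidiagonal j,
        ζ ^ p.1 * qRecip ζ p.1 * aeval ζ (qSign p.2 * qBinom p.1 p.2) =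
      ∑ p ∈ antidiagonal m, qRecip ζ (p.2 + 1) * aeval ζ (qSign (p.2 + 1) * qBinom p.1 p.2) := by
  let f (i k : ℕ) : K := ζ ^ i * qRecip ζ i * aeval ζ (qSign k * qBinom i k)
  have hflip : ∑ j ∈ range (m + 2), ∑ p ∈ antidiagonal j, f p.1 p.2 =
      ∑ i ∈ range (m + 2), ∑ k ∈ range (m + 2 - i), f i k := by
    simp_rw [Nat.sum_antidiagonal_eq_sum_range_succ f]
    exact sum_range_diag_flip _ _
  rw [hflip, sum_range_succ', Nat.sum_antidiagonal_eq_sum_range_succ fun i k ↦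
    qRecip ζ (k + 1) * aeval ζ (qSign (k + 1) * qBinom i k)]
  have hzero : ∑ k ∈ range (m + 2 - 0), f 0 k = 0 :=
    sum_eq_zero fun k _ ↦ by simp only [f, qRecip_eq_zero (pow_zero ζ), mul_zero, zero_mul]
  rw [hzero, add_zero]
  refine sum_congr rfl fun i hi ↦ ?_
  obtain ⟨r, rfl⟩ := Nat.exists_eq_add_of_le (Nat.le_of_lt_succ (mem_range.1 hi))
  have hrefl : qRecip ζ (r + 1) = -(ζ ^ (i + 1) * qRecip ζ (i + 1)) :=
    qRecip_reflect (by rw [← hζ.pow_eq_one]; ring)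
  rw [show i + r + 2 - (i + 1) = r + 1 by lia, add_tsub_cancel_left, hrefl, ← mul_sum, ← map_sum,
    sum_qSign_mul_qBinom, qSign_succ]
  simp only [map_mul, map_neg, map_pow, aeval_X]
  ring

theorem mul_sum_qRecip_mul_altBinomSum_add (hζ : IsPrimitiveRoot ζ n) (hn : 1 < n) :
    n * ∑ m ∈ range n,
        qRecip ζ m * (ζ ^ m * aeval ζ (altBinomSum 0 m) + aeval ζ (altBinomSum 0 (m + 1))) =
      -aeval ζ (eulerDeriv (altBinomSum 0 n + altBinomSum 0 (n + 1))) := by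
  obtain ⟨m, rfl⟩ := Nat.exists_eq_add_of_le' hn
  rw [sum_congr rfl fun j hj ↦ qRecip_mul_altBinomSum_add hζ (mem_range.1 hj),
    sum_antidiagonal_qRecip hζ, aeval_eulerDeriv_altBinomSum_add hζ, neg_neg]

end DiagonalIdentity

section FiniteForm

theorem centralSum_zero_three_mul (N : ℕ) :
    centralSum 0 (3 * N) = ∑ t ∈ range N,
      (qSign (3 * t + 2) * (X ^ (2 * t + 1) * pentagonalTerm (t + 1)) *
          qBinom (2 * (3 * N)) (3 * N + (3 * t + 2)) -
        qSign (3 * t + 1) * (X ^ (2 * t) * pentagonalTerm t) *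
          qBinom (2 * (3 * N)) (3 * N + (3 * t + 1))) := by
  rw [centralSum_eq_sum (Nat.le_add_left _ _)]
  refine sum_congr rfl fun t _ ↦ ?_
  have h₁ := qSign_three_mul_add t 1
  have h₂ := qSign_three_mul_add t 2
  simp only [qSign_succ, qSign_zero] at h₁ h₂ ⊢
  rw [pentagonalTerm_succ, show 3 * N + (0 + 3 * t) + 1 = 3 * N + (3 * t + 1) by ring,
    show 3 * N + (0 + 3 * t) + 2 = 3 * N + (3 * t + 2) by ring]
  linear_combination
    qBinom (2 * (3 * N)) (3 * N + (3 * t + 1)) * h₁ +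
    X ^ (3 * t + 2) * qBinom (2 * (3 * N)) (3 * N + (3 * t + 2)) * h₂

theorem qSign_mul_pentagonalTerm_mul_qBinom_self (N : ℕ) :
    qSign (3 * N) * (X ^ (3 * N) * pentagonalTerm N) * qBinom (2 * (3 * N)) (3 * N + 3 * N) =
      X ^ (N * (6 * N + 1)) := by
  have h := qSign_three_mul_add N 0
  simp only [add_zero, qSign_zero, zero_mul, mul_zero, one_mul] at h
  rw [← two_mul, qBinom_self, mul_one]
  linear_combination X ^ N * h

theorem X_mul_centralSum_one_three_mul {N : ℕ} (hN : 0 < N) :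
    X * centralSum 1 (3 * N) =
      -(∑ t ∈ range N,
          qSign (3 * t + 2) * pentagonalTerm (t + 1) * qBinom (2 * (3 * N)) (3 * N + (3 * t + 2)) +
        ∑ t ∈ Ico 1 N,
          qSign (3 * t) * (X ^ (3 * t) * pentagonalTerm t) * qBinom (2 * (3 * N)) (3 * N + 3 * t) +
        X ^ (N * (6 * N + 1))) := by
  rw [← qSign_mul_pentagonalTerm_mul_qBinom_self, add_assoc,
    ← sum_Ico_succ_top (Nat.one_le_of_lt hN), sum_Ico_eq_sum_range, Nat.add_sub_cancel,
    ← sum_add_distrib, centralSum_eq_sum (Nat.le_add_left _ _), mul_sum, ← sum_neg_distrib]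
  refine sum_congr rfl fun t _ ↦ ?_
  have h₂ := qSign_three_mul_add t 2
  have h₃ := qSign_three_mul_add (t + 1) 0
  simp only [add_zero, qSign_zero] at h₂ h₃
  rw [show qSign 2 = X by simp [qSign_succ]] at h₂
  rw [show 3 * N + (1 + 3 * t) + 1 = 3 * N + (3 * t + 2) by ring,
    show 3 * N + (1 + 3 * t) + 2 = 3 * N + 3 * (t + 1) by ring, add_comm 1 t]
  rw [pentagonalTerm_succ] at h₃ ⊢
  linear_combination
    (-(X ^ (t + 1) * qBinom (2 * (3 * N)) (3 * N + (3 * t + 2)))) * h₂ +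
    X ^ (t + 1) * qBinom (2 * (3 * N)) (3 * N + 3 * (t + 1)) * h₃

end FiniteForm

section PentagonalSum

theorem sum_range_eq_of_reflect {M : Type*} [AddCommMonoid M] {n : ℕ} {f g : ℕ → M}
    (h : ∀ i j, i + j + 1 = n → f i = g j) : ∑ i ∈ range n, f i = ∑ j ∈ range n, g j := by
  rw [← sum_range_reflect g]
  exact sum_congr rfl fun i hi ↦ h i _ (by have := mem_range.1 hi; lia)

theorem sum_range_three_mul {M : Type*} [AddCommMonoid M] (f : ℕ → M) (n : ℕ) :
    ∑ i ∈ range (3 * n), f i =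
      ∑ i ∈ range n, (f (3 * i) + f (3 * i + 1) + f (3 * i + 2)) := by
  induction n with
  | zero => simp
  | succ n ih =>
    rw [mul_add_one, sum_range_succ, sum_range_succ, sum_range_succ, ih, sum_range_succ]
    simp only [add_assoc]

variable {K : Type*} [Field K] {ζ : K} {N : ℕ}

theorem one_add_pow_add_pow_two_mul (hζ : IsPrimitiveRoot ζ (3 * N)) (hN : 0 < N) :
    1 + ζ ^ N + ζ ^ (2 * N) = 0 := by
  have hω : IsPrimitiveRoot (ζ ^ N) 3 := hζ.pow (by lia) (mul_comm 3 N)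
  have h := hω.geom_sum_eq_zero (by lia)
  simp only [sum_range_succ, range_zero, sum_empty] at h
  linear_combination h

theorem qRecip_three_mul_add_one (hζ : IsPrimitiveRoot ζ (3 * N)) {i j : ℕ} (h : i + j + 1 = N) :
    qRecip ζ (3 * i + 1) = -(ζ ^ (3 * j + 2) * qRecip ζ (3 * j + 2)) :=
  qRecip_reflect (by rw [← hζ.pow_eq_one, ← h]; ring)

variable [CharZero K]

theorem aeval_pentagonalTerm_self (hζ : IsPrimitiveRoot ζ (3 * N)) (hN : 0 < N) :
    aeval ζ (pentagonalTerm N) = -ζ ^ N := by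
  have h := congrArg (aeval ζ) (qSign_three_mul_add N 0)
  simp only [add_zero, map_mul, aeval_qSign_self hζ (by lia : 0 < 3 * N), map_pow, aeval_X,
    qSign_zero, zero_mul, mul_zero, one_mul, show 6 * N ^ 2 = 3 * N * (2 * N) by ring,
    pow_mul ζ (3 * N), hζ.pow_eq_one, one_pow] at h
  linear_combination (-ζ ^ N) * h - aeval ζ (pentagonalTerm N) * hζ.pow_eq_one

theorem aeval_pentagonalTerm_reflect (hζ : IsPrimitiveRoot ζ (3 * N)) (hN : 0 < N) {s u : ℕ}
    (h : s + u = N) :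
    aeval ζ (pentagonalTerm u) = -(ζ ^ (N + s) * aeval ζ (pentagonalTerm s)) := by
  have hadd := congrArg (aeval ζ) (pentagonalTerm_add s u)
  have hsq := congrArg (aeval ζ) (X_pow_mul_pentagonalTerm_sq s)
  have hpow : ζ ^ (3 * (s * u)) * ζ ^ (3 * s ^ 2) = 1 := by
    rw [← pow_add, show 3 * (s * u) + 3 * s ^ 2 = 3 * (s + u) * s by ring, h, pow_mul,
      hζ.pow_eq_one, one_pow]
  simp only [h, aeval_pentagonalTerm_self hζ hN, map_mul, map_pow, aeval_X] at hadd hsq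
  linear_combination (-ζ ^ s * aeval ζ (pentagonalTerm s)) * hadd -
    ζ ^ (3 * (s * u)) * aeval ζ (pentagonalTerm u) * hsq - aeval ζ (pentagonalTerm u) * hpow

/-- The sum of pentagonal terms, weighted by `1/(1 - ζ^i)`, to which the Euler derivative of the
Catalan sum reduces at a primitive `3N`-th root of unity `ζ`. -/
noncomputable def pentagonalRecipSum (ζ : K) (N : ℕ) : K :=
  ∑ t ∈ range N, (aeval ζ (pentagonalTerm (t + 1)) * qRecip ζ (3 * t + 2) +
    ζ ^ (3 * t) * aeval ζ (pentagonalTerm t) * qRecip ζ (3 * t))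

theorem sum_pow_mul_pentagonalTerm_mul_qRecip_eq (hζ : IsPrimitiveRoot ζ (3 * N)) (hN : 0 < N) :
    ∑ t ∈ range N, ζ ^ (2 * t) * aeval ζ (pentagonalTerm t) * qRecip ζ (3 * t + 1) =
      ∑ t ∈ range N, ζ ^ (2 * t + 1) * aeval ζ (pentagonalTerm (t + 1)) * qRecip ζ (3 * t + 2) := by
  refine sum_range_eq_of_reflect fun i j h ↦ ?_
  rw [qRecip_three_mul_add_one hζ h, aeval_pentagonalTerm_reflect hζ hN (s := j + 1) (by lia)]
  have h1 := hζ.pow_eq_one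
  subst h
  linear_combination ζ ^ (2 * j + 1) * aeval ζ (pentagonalTerm (j + 1)) * qRecip ζ (3 * j + 2) * h1

theorem sum_pow_mul_pentagonalTerm_mul_qRecip_three_mul_add_one (hζ : IsPrimitiveRoot ζ (3 * N))
    (hN : 0 < N) :
    ∑ t ∈ range N, ζ ^ (4 * t + 1) * aeval ζ (pentagonalTerm t) * qRecip ζ (3 * t + 1) =
      ζ ^ (2 * N) * ∑ t ∈ range N, aeval ζ (pentagonalTerm (t + 1)) * qRecip ζ (3 * t + 2) := by
  rw [mul_sum]
  refine sum_range_eq_of_reflect fun i j h ↦ ?_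
  rw [qRecip_three_mul_add_one hζ h, aeval_pentagonalTerm_reflect hζ hN (s := j + 1) (by lia)]
  have h1 := hζ.pow_eq_one
  subst h
  linear_combination ζ ^ (2 * (i + j + 1)) * aeval ζ (pentagonalTerm (j + 1)) *
    qRecip ζ (3 * j + 2) * h1

theorem sum_pow_mul_pentagonalTerm_mul_qRecip_three_mul (hζ : IsPrimitiveRoot ζ (3 * N))
    (hN : 0 < N) :
    ∑ t ∈ range N, ζ ^ t * aeval ζ (pentagonalTerm t) * qRecip ζ (3 * t) =
      ζ ^ (2 * N) *
        ∑ t ∈ range N, ζ ^ (3 * t) * aeval ζ (pentagonalTerm t) * qRecip ζ (3 * t) := by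
  have hext (f : ℕ → K) :
      ∑ t ∈ range N, f t * qRecip ζ (3 * t) = ∑ t ∈ range (N + 1), f t * qRecip ζ (3 * t) := by
    rw [sum_range_succ, qRecip_eq_zero hζ.pow_eq_one, mul_zero, add_zero]
  rw [hext, hext, mul_sum]
  refine sum_range_eq_of_reflect fun i j h ↦ ?_
  obtain rfl : j + i = N := by lia
  rw [aeval_pentagonalTerm_reflect hζ hN rfl,
    qRecip_reflect (i := 3 * j) (k := 3 * i) (by rw [← mul_add, hζ.pow_eq_one])]
  ring

theorem sum_qRecip_mul_altBinomSum_add (hζ : IsPrimitiveRoot ζ (3 * N)) (hN : 0 < N) :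
    ∑ m ∈ range (3 * N), qRecip ζ m *
        (ζ ^ m * aeval ζ (altBinomSum 0 m) + aeval ζ (altBinomSum 0 (m + 1))) =
      (1 + ζ ^ (2 * N)) * pentagonalRecipSum ζ N := by
  have hU := sum_pow_mul_pentagonalTerm_mul_qRecip_three_mul_add_one hζ hN
  have hV := sum_pow_mul_pentagonalTerm_mul_qRecip_three_mul hζ hN
  rw [pentagonalRecipSum, sum_add_distrib, mul_add, add_mul, add_mul, ← hU, ← hV, one_mul, one_mul,
    sum_range_three_mul, ← sum_add_distrib, ← sum_add_distrib, ← sum_add_distrib]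
  refine sum_congr rfl fun t _ ↦ ?_
  rw [show 3 * t + 2 + 1 = 3 * (t + 1) by ring, show 3 * t + 1 + 1 = 3 * t + 2 by ring]
  simp only [altBinomSum_zero_three_mul, altBinomSum_zero_three_mul_add_one,
    altBinomSum_zero_three_mul_add_two, map_mul, map_pow, aeval_X, map_zero]
  ring

theorem six_mul_mul_pentagonalRecipSum (hζ : IsPrimitiveRoot ζ (3 * N)) (hN : 0 < N) :
    6 * N * pentagonalRecipSum ζ N = N * (2 + (3 * N + 1) * ζ ^ (2 * N)) := by
  have hsum := mul_sum_qRecip_mul_altBinomSum_add hζ (by lia)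
  rw [sum_qRecip_mul_altBinomSum_add hζ hN, altBinomSum_zero_three_mul,
    altBinomSum_zero_three_mul_add_one, map_add, map_add, aeval_eulerDeriv_mul, eulerDeriv_X_pow,
    aeval_pentagonalTerm_self hζ hN] at hsum
  have hderiv := congrArg (aeval ζ) (two_mul_eulerDeriv_pentagonalTerm N)
  simp only [map_mul, map_sub, map_natCast, map_ofNat, map_one, map_pow, aeval_X,
    aeval_pentagonalTerm_self hζ hN] at hsum hderiv
  push_cast at hsum
  linear_combination (-2 * ζ ^ (2 * N)) * hsum + ζ ^ (2 * N) * (1 + ζ ^ N) * hderiv +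
    N * ((6 * pentagonalRecipSum ζ N - 2) * (1 - ζ ^ N + ζ ^ (2 * N)) - (3 * N - 1) * ζ ^ (2 * N)) *
      one_add_pow_add_pow_two_mul hζ hN

end PentagonalSum

section Congruence

variable {K : Type*} [Field K] [CharZero K] {ζ : K} {N : ℕ}

theorem aeval_centralSum_zero (hζ : IsPrimitiveRoot ζ (3 * N)) :
    aeval ζ (centralSum 0 (3 * N)) = 0 := by
  rw [centralSum_zero_three_mul, map_sum]
  refine sum_eq_zero fun t ht ↦ ?_
  have ht := mem_range.1 ht
  rw [map_sub, aeval_qSign_mul_mul_qBinom_two_mul hζ (by lia) (by lia),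
    aeval_qSign_mul_mul_qBinom_two_mul hζ (by lia) (by lia), sub_zero]

theorem aeval_eulerDeriv_centralSum_zero (hζ : IsPrimitiveRoot ζ (3 * N)) (hN : 0 < N) :
    aeval ζ (eulerDeriv (centralSum 0 (3 * N))) = 0 := by
  rw [← mul_zero (2 * (3 * N : ℕ) : K),
    ← sub_eq_zero.2 (sum_pow_mul_pentagonalTerm_mul_qRecip_eq hζ hN).symm, ← sum_sub_distrib,
    centralSum_zero_three_mul, map_sum, map_sum, mul_sum]
  refine sum_congr rfl fun t ht ↦ ?_
  have ht := mem_range.1 ht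
  rw [map_sub, map_sub, aeval_eulerDeriv_qSign_mul_qBinom_two_mul hζ (by lia) (by lia),
    aeval_eulerDeriv_qSign_mul_qBinom_two_mul hζ (by lia) (by lia)]
  simp only [map_mul, map_pow, aeval_X]
  ring

theorem aeval_X_mul_centralSum_one (hζ : IsPrimitiveRoot ζ (3 * N)) (hN : 0 < N) :
    aeval ζ (X * centralSum 1 (3 * N)) = -aeval ζ (X ^ (N * (6 * N + 1)) : ℚ[X]) := by
  rw [X_mul_centralSum_one_three_mul hN, map_neg, map_add, map_add, map_sum, map_sum, sum_eq_zero,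
    sum_eq_zero, zero_add, zero_add]
  · intro t ht
    have ht := mem_Ico.1 ht
    exact aeval_qSign_mul_mul_qBinom_two_mul hζ (by lia) (by lia) _
  · intro t ht
    have ht := mem_range.1 ht
    exact aeval_qSign_mul_mul_qBinom_two_mul hζ (by lia) (by lia) _

theorem aeval_eulerDeriv_X_mul_centralSum_one (hζ : IsPrimitiveRoot ζ (3 * N)) (hN : 0 < N) :
    aeval ζ (eulerDeriv (X * centralSum 1 (3 * N))) =
      -(6 * N * pentagonalRecipSum ζ N + aeval ζ (eulerDeriv (X ^ (N * (6 * N + 1))))) := by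
  have hcast : (6 * N : K) = 2 * (3 * N : ℕ) := by push_cast; ring
  have hIco :
      ∑ t ∈ range N, ζ ^ (3 * t) * aeval ζ (pentagonalTerm t) * qRecip ζ (3 * t) =
        ∑ t ∈ Ico 1 N, ζ ^ (3 * t) * aeval ζ (pentagonalTerm t) * qRecip ζ (3 * t) := by
    rw [sum_range_eq_add_Ico _ hN, mul_zero, qRecip_eq_zero (pow_zero ζ), mul_zero, zero_add]
  rw [X_mul_centralSum_one_three_mul hN, pentagonalRecipSum, sum_add_distrib, hIco, hcast,
    mul_add (2 * _), mul_sum, mul_sum]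
  simp only [map_neg, map_add, map_sum]
  congr 3
  · refine sum_congr rfl fun t ht ↦ ?_
    have ht := mem_range.1 ht
    exact aeval_eulerDeriv_qSign_mul_qBinom_two_mul hζ (by lia) (by lia) _
  · refine sum_congr rfl fun t ht ↦ ?_
    have ht := mem_Ico.1 ht
    rw [aeval_eulerDeriv_qSign_mul_qBinom_two_mul hζ (by lia) (by lia), map_mul, map_pow, aeval_X]

theorem aeval_sum_X_pow_mul_qCatalan_sub (hζ : IsPrimitiveRoot ζ (3 * N)) (hN : 0 < N) :
    aeval ζ (∑ k ∈ range (3 * N), X ^ k * qCatalan k - X ^ (N * (6 * N + 1))) = 0 := by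
  rw [sum_X_pow_mul_qCatalan, map_sub, map_sub, aeval_centralSum_zero hζ,
    aeval_X_mul_centralSum_one hζ hN]
  ring

theorem aeval_eulerDeriv_sum_X_pow_mul_qCatalan_sub (hζ : IsPrimitiveRoot ζ (3 * N))
    (hN : 0 < N) :
    aeval ζ (eulerDeriv (∑ k ∈ range (3 * N), X ^ k * qCatalan k - X ^ (N * (6 * N + 1)))) =
      N * (2 + (3 * N + 1) * ζ ^ (2 * N)) := by
  rw [← six_mul_mul_pentagonalRecipSum hζ hN, sum_X_pow_mul_qCatalan]
  simp only [map_sub, aeval_eulerDeriv_centralSum_zero hζ hN,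
    aeval_eulerDeriv_X_mul_centralSum_one hζ hN]
  ring

theorem aeval_C_mul_X_pow_sub_one_mul {n : ℕ} (hζ : ζ ^ n = 1) (c : ℚ) (f : ℚ[X]) :
    aeval ζ (C c * (X ^ n - 1) * f) = 0 := by
  simp [hζ]

theorem aeval_eulerDeriv_C_mul_X_pow_sub_one_mul {n : ℕ} (hζ : ζ ^ n = 1) (c : ℚ) (f : ℚ[X]) :
    aeval ζ (eulerDeriv (C c * (X ^ n - 1) * f)) = c * n * aeval ζ f := by
  rw [mul_assoc, C_mul', Derivation.map_smul, map_smul, aeval_eulerDeriv_mul, map_sub, map_sub,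
    eulerDeriv_X_pow]
  simp only [map_pow, aeval_X, hζ, map_one, sub_self, zero_mul, Derivation.map_one_eq_zero,
    sub_zero, map_mul, map_natCast, mul_one, zero_add, Algebra.smul_def, eq_ratCast]
  ring

end Congruence

theorem qCatalan_sum_congruence (n : ℕ) (hn : 0 < n) (h3 : 3 ∣ n) :
    (Polynomial.cyclotomic n ℚ) ^ 2 ∣
      (∑ k ∈ Finset.range n, X ^ k * qCatalan k) -
        (X ^ (n * (2 * n + 1) / 3) +
          Polynomial.C (1 / 3 : ℚ) * (X ^ n - 1) * (2 + (n + 1 : ℚ) • X ^ (2 * n / 3))) := by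
  obtain ⟨N, rfl⟩ := h3
  have hN : 0 < N := by lia
  obtain ⟨ζ, hζ⟩ : ∃ ζ : ℂ, IsPrimitiveRoot ζ (3 * N) := ⟨_, Complex.isPrimitiveRoot_exp _ hn.ne'⟩
  have hexp : 3 * N * (2 * (3 * N) + 1) / 3 = N * (6 * N + 1) :=
    Nat.div_eq_of_eq_mul_left three_pos (by ring)
  rw [hexp, show 2 * (3 * N) / 3 = 2 * N by lia, ← sub_sub]
  apply cyclotomic_sq_dvd_sub hn hζ
  · rw [aeval_sum_X_pow_mul_qCatalan_sub hζ hN, aeval_C_mul_X_pow_sub_one_mul hζ.pow_eq_one]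
  · rw [aeval_eulerDeriv_sum_X_pow_mul_qCatalan_sub hζ hN,
      aeval_eulerDeriv_C_mul_X_pow_sub_one_mul hζ.pow_eq_one, map_add, map_smul, map_ofNat,
      Algebra.smul_def, map_pow, aeval_X]
    push_cast
    simp only [map_ofNat]
    ring
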